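/- Let Γ be a reduced, non-ascending labeled graph with all labels positive, let e, f be mobile edges of Γ with f ∉ {e, ē}, and let A be an edge path none of whose edges lies in {e, ē, f, f̄}. Suppose that in Γ the edge e can slide over A and that afterwards f can slide over e (every slide valid, every intermediate graph reduced). Then, starting again from Γ, f can slide over the concatenated path Ā·e (where Ā = (ēₛ,…,ē₁) is the reverse of A = (e₁,…,eₛ)) and afterwards e can slide over A, and the two composite slide sequences produce the same labeled graph. -/

import Mathlib

/-! Labeled graphs in the sense of generalized Baumslag–Solitar theory. -/

structure LGraph (V E : Type) where
  o : E → V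
  bar : E → E
  bar_bar : ∀ e, bar (bar e) = e
  bar_ne : ∀ e, bar e ≠ e
  lab : E → ℤ

namespace LGraph

variable {V E V' E' : Type}

/-- Terminal vertex of an oriented edge. -/
def t (G : LGraph V E) (e : E) : V := G.o (G.bar e)

/-- All labels are positive. -/
def Positive (G : LGraph V E) : Prop := ∀ e : E, 0 < G.lab e

/-- No collapsible edge: every label-1 edge is a loop. -/
def Reduced (G : LGraph V E) : Prop := ∀ e : E, G.lab e = 1 → G.o e = G.t e

/-- An `n`-rose: one vertex and `n` pairs of oriented edges. -/
def IsRose (G : LGraph V E) (n : ℕ) : Prop :=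
  Nat.card V = 1 ∧ Nat.card E = 2 * n

/-- Modulus of a single oriented edge: `λ(ē)/λ(e)`. -/
def qe (G : LGraph V E) (e : E) : ℚ := (G.lab (G.bar e) : ℚ) / (G.lab e : ℚ)

/-- Modulus of an edge path. -/
def q (G : LGraph V E) (l : List E) : ℚ := (l.map G.qe).prod

/-- Consecutive edges match up. -/
def IsEdgePath (G : LGraph V E) (l : List E) : Prop :=
  List.Chain' (fun a b => G.t a = G.o b) l

/-- An `e`-edge path. -/
def IsEEdgePath (G : LGraph V E) (e : E) (l : List E) : Prop :=
  G.IsEdgePath l ∧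
  (∀ a ∈ l, a ≠ e ∧ a ≠ G.bar e) ∧
  (∀ a ∈ l.head?, G.o a = G.o e) ∧
  ∀ i : Fin l.length, ∃ k : ℤ,
    (G.lab e : ℚ) * G.q (l.take i.1) = (k : ℚ) * (G.lab (l.get i) : ℚ)

/-- A monotone cycle `(e₁,…,eₛ,e)`. -/
def IsMonotoneCycle (G : LGraph V E) (l : List E) (e : E) : Prop :=
  G.IsEEdgePath (G.bar e) l ∧
  G.t (l.getLastD e) = G.o e ∧
  ∃ k : ℤ, G.q (l ++ [e]) = (k : ℚ)

/-- A strict monotone cycle. -/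
def IsStrictMonotoneCycle (G : LGraph V E) (l : List E) (e : E) : Prop :=
  G.IsMonotoneCycle l e ∧ G.q (l ++ [e]) ≠ 1

def HasStrictMonotoneCycle (G : LGraph V E) : Prop :=
  ∃ (l : List E) (e : E), G.IsStrictMonotoneCycle l e

/-- A strict `e`-integer cycle. -/
def IsStrictIntegerCycle (G : LGraph V E) (e : E) (l : List E) : Prop :=
  G.IsEEdgePath e l ∧ l ≠ [] ∧
  G.t (l.getLastD e) = G.o (l.headD e) ∧
  (∃ k : ℤ, G.q l = (k : ℚ)) ∧ G.q l ≠ 1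

/-- A mobile edge. -/
def Mobile (G : LGraph V E) (e : E) : Prop :=
  (∃ l, G.IsStrictMonotoneCycle l e ∨ G.IsStrictMonotoneCycle l (G.bar e)) ∨
  (∃ l, G.IsStrictIntegerCycle e l ∨ G.IsStrictIntegerCycle (G.bar e) l)

/-- The single slide of `e` over `f` is permitted. -/
def CanSlide (G : LGraph V E) (e f : E) : Prop :=
  f ≠ e ∧ f ≠ G.bar e ∧ G.o f = G.o e ∧ G.lab f ∣ G.lab e

open Classical in
/-- The result of the single slide of `e` over `f`. -/
noncomputable def slide (G : LGraph V E) (e f : E) : LGraph V E where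
  o := fun x => if x = e then G.t f else G.o x
  bar := G.bar
  bar_bar := G.bar_bar
  bar_ne := G.bar_ne
  lab := fun x => if x = e then G.lab e * G.lab (G.bar f) / G.lab f else G.lab x

/-- Successively slide `e` over the edges of a path. -/
noncomputable def slidePath : LGraph V E → E → List E → LGraph V E
  | G, _, [] => G
  | G, e, f :: l => slidePath (G.slide e f) e l

/-- Each single slide in the successive slide of `e` over a path is permitted. -/
def CanSlidePath : LGraph V E → E → List E → Prop
  | _, _, [] => True
  | G, e, f :: l => G.CanSlide e f ∧ CanSlidePath (G.slide e f) e l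

/-- Each single slide is permitted and each intermediate graph is reduced. -/
def GoodSlidePath : LGraph V E → E → List E → Prop
  | _, _, [] => True
  | G, e, f :: l => G.CanSlide e f ∧ (G.slide e f).Reduced ∧ GoodSlidePath (G.slide e f) e l

/-- Perform a finite sequence of single slides, given as pairs (slid edge, edge slid over). -/
noncomputable def slideSeq : LGraph V E → List (E × E) → LGraph V E
  | G, [] => G
  | G, p :: rest => slideSeq (G.slide p.1 p.2) rest

/-- A sequence of permitted single slides, each sliding a mobile edge. -/
def MobileSlideSeq : LGraph V E → List (E × E) → Prop
  | _, [] => True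
  | G, p :: rest => G.Mobile p.1 ∧ G.CanSlide p.1 p.2 ∧ MobileSlideSeq (G.slide p.1 p.2) rest

/-- Isomorphism of labeled graphs. -/
def Isom (G : LGraph V E) (G' : LGraph V' E') : Prop :=
  ∃ (φ : V → V') (Φ : E → E'),
    Function.Bijective φ ∧ Function.Bijective Φ ∧
    (∀ x, G'.o (Φ x) = φ (G.o x)) ∧
    (∀ x, G'.bar (Φ x) = Φ (G.bar x)) ∧
    (∀ x, G'.lab (Φ x) = G.lab x)

open Classical in
/-- The result of the induction move at the loop `e` with multiplier `m`. -/
noncomputable def inductionMove (G : LGraph V E) (e : E) (m : ℤ) : LGraph V E where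
  o := G.o
  bar := G.bar
  bar_bar := G.bar_bar
  bar_ne := G.bar_ne
  lab := fun x => if x ≠ e ∧ x ≠ G.bar e ∧ G.o x = G.o e then m * G.lab x else G.lab x

/-- `G'` is obtained from `G` by a single slide move (up to isomorphism). -/
def IsSlideMove (G : LGraph V E) (G' : LGraph V' E') : Prop :=
  ∃ e f, G.CanSlide e f ∧ Isom G' (G.slide e f)

/-- `G'` is obtained from `G` by a (forward) induction move. -/
def IsInductionMove (G : LGraph V E) (G' : LGraph V' E') : Prop :=
  ∃ (e : E) (m : ℤ), G.o e = G.t e ∧ G.lab e = 1 ∧ 1 ≤ m ∧ m ∣ G.lab (G.bar e) ∧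
    Isom G' (G.inductionMove e m)

/-- `G'` is obtained from `G` by an A-move. -/
def IsAMove (G : LGraph V E) (G' : LGraph V' E') : Prop :=
  ∃ (e d : E) (e' : E') (φ : V → V') (Φ : E → E'),
    G.o e = G.t e ∧ G.lab e = 1 ∧ G.lab (G.bar e) ≠ 1 ∧
    G.o d = G.o e ∧ G.t d ≠ G.o e ∧
    G.lab d ≠ 1 ∧ G.lab (G.bar d) ≠ 1 ∧ G.lab d ∣ G.lab (G.bar e) ∧
    (∀ x : E, G.o x = G.o e → x = e ∨ x = G.bar e ∨ x = d) ∧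
    G'.o e' = φ (G.t d) ∧ G'.t e' = φ (G.t d) ∧
    G'.lab e' = G.lab (G.bar d) ∧
    G'.lab (G'.bar e') = G.lab (G.bar d) * G.lab (G.bar e) ∧
    (∀ w₁ w₂ : V, w₁ ≠ G.o e → w₂ ≠ G.o e → φ w₁ = φ w₂ → w₁ = w₂) ∧
    (∀ v' : V', ∃ w : V, w ≠ G.o e ∧ φ w = v') ∧
    (∀ x : E, x ≠ e → x ≠ G.bar e → x ≠ d → x ≠ G.bar d →
      Φ x ≠ e' ∧ Φ x ≠ G'.bar e' ∧
      G'.o (Φ x) = φ (G.o x) ∧ G'.bar (Φ x) = Φ (G.bar x) ∧ G'.lab (Φ x) = G.lab x) ∧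
    (∀ x y : E, x ≠ e → x ≠ G.bar e → x ≠ d → x ≠ G.bar d →
      y ≠ e → y ≠ G.bar e → y ≠ d → y ≠ G.bar d → Φ x = Φ y → x = y) ∧
    (∀ y : E', y ≠ e' → y ≠ G'.bar e' →
      ∃ x : E, x ≠ e ∧ x ≠ G.bar e ∧ x ≠ d ∧ x ≠ G.bar d ∧ Φ x = y)

/-- A strict ascending loop: a loop with `λ(e) = 1 ≠ λ(ē)`. -/
def HasStrictAscendingLoop (G : LGraph V E) : Prop :=
  ∃ e : E, G.o e = G.t e ∧ G.lab e = 1 ∧ G.lab (G.bar e) ≠ 1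

end LGraph

/-- A labeled graph with its vertex and edge types bundled. -/
structure BGraph where
  V : Type
  E : Type
  G : LGraph V E

/-- An elementary deformation move: a slide, an induction move or its inverse,
or an A-move or its inverse. -/
def BGraph.ElemMove (X Y : BGraph) : Prop :=
  LGraph.IsSlideMove X.G Y.G ∨ LGraph.IsInductionMove X.G Y.G ∨
  LGraph.IsInductionMove Y.G X.G ∨ LGraph.IsAMove X.G Y.G ∨ LGraph.IsAMove Y.G X.G

/-- A finite sequence of elementary moves with all intermediate graphs reduced. -/
def BGraph.MoveSeq : BGraph → BGraph → Prop :=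
  Relation.ReflTransGen (fun X Y => X.ElemMove Y ∧ Y.G.Reduced)

/-- A reduced labeled graph is non-ascending if no reduced labeled graph obtained from it
by slide, induction and A-moves (all intermediate graphs reduced) contains a
strict ascending loop. -/
def LGraph.NonAscending {V E : Type} (G : LGraph V E) : Prop :=
  ∀ Y : BGraph, BGraph.MoveSeq ⟨V, E, G⟩ Y → ¬ Y.G.HasStrictAscendingLoop

/-!
Induct on `A`. If `e` slides over a single edge `a` and then `f` slides over `e`, then `f` may
instead cross `ā` to the old origin of `e`, slide over `e` there, and leave `e` to slide over `a`
afterwards. For `A = a·l`, the induction hypothesis applied after sliding `e` over `a` lets `f`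
slide over `l̄·e`. The slides of `f` over `l̄` commute with that of `e` over `a`, because `l̄`
avoids `e, ē` and `a` avoids `f, f̄`. So the slide of `e` over `a` can be postponed until just
before that of `f` over `e`, where the case of a single edge applies.
-/

namespace LGraph

variable {V E : Type} {G : LGraph V E} {e f a b x : E} {A B : List E}

attribute [ext] LGraph

theorem bar_involutive (G : LGraph V E) : Function.Involutive G.bar := G.bar_bar

theorem bar_ne_of_ne_bar (h : x ≠ G.bar e) : G.bar x ≠ e :=
  mt G.bar_involutive.eq_iff.mp h

theorem t_bar (G : LGraph V E) (e : E) : G.t (G.bar e) = G.o e :=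
  congrArg G.o (G.bar_bar e)

theorem ne_and_ne_bar_of_mem_reverse_map_bar (hA : ∀ x ∈ A, x ≠ e ∧ x ≠ G.bar e) :
    ∀ x ∈ A.reverse.map G.bar, x ≠ e ∧ x ≠ G.bar e := by
  intro x hx
  obtain ⟨y, hy, rfl⟩ := List.mem_map.mp hx
  obtain ⟨hye, hybar⟩ := hA y (List.mem_reverse.mp hy)
  exact ⟨bar_ne_of_ne_bar hybar, G.bar_involutive.injective.ne hye⟩

section Slide

@[simp]
theorem slide_bar (G : LGraph V E) (e a : E) : (G.slide e a).bar = G.bar := rfl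

@[simp]
theorem slide_o_self (G : LGraph V E) (e a : E) : (G.slide e a).o e = G.t a := if_pos rfl

theorem slide_o_of_ne (hx : x ≠ e) : (G.slide e a).o x = G.o x := if_neg hx

theorem slide_t_of_ne (hx : x ≠ G.bar e) : (G.slide e a).t x = G.t x :=
  slide_o_of_ne (bar_ne_of_ne_bar hx)

theorem slide_lab_of_ne (hx : x ≠ e) : (G.slide e a).lab x = G.lab x := if_neg hx

theorem slide_lab_bar_of_ne (hx : x ≠ G.bar e) :
    (G.slide e a).lab (G.bar x) = G.lab (G.bar x) :=
  slide_lab_of_ne (bar_ne_of_ne_bar hx)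

theorem slide_lab_self (G : LGraph V E) (e a : E) :
    (G.slide e a).lab e = G.lab e * G.lab (G.bar a) / G.lab a := if_pos rfl

theorem slide_lab_self_of_eq_mul (ha : G.lab a ≠ 0) {k : ℤ} (hk : G.lab e = G.lab a * k) :
    (G.slide e a).lab e = G.lab (G.bar a) * k := by
  rw [slide_lab_self, hk, mul_assoc, Int.mul_ediv_cancel_left _ ha, mul_comm]

theorem CanSlide.slide_lab_ne_zero (h : G.CanSlide e a) (hlab : ∀ x, G.lab x ≠ 0) (x : E) :
    (G.slide e a).lab x ≠ 0 := by
  obtain ⟨k, hk⟩ := h.2.2.2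
  obtain rfl | hx := eq_or_ne x e
  · rw [slide_lab_self_of_eq_mul (hlab a) hk]
    exact mul_ne_zero (hlab _) (right_ne_zero_of_mul (hk ▸ hlab x))
  · rw [slide_lab_of_ne hx]
    exact hlab x

theorem canSlide_slide_iff (hfe : f ≠ e) (hbe : b ≠ e) :
    (G.slide e a).CanSlide f b ↔ G.CanSlide f b := by
  simp only [CanSlide, slide_bar, slide_o_of_ne hfe, slide_o_of_ne hbe, slide_lab_of_ne hfe,
    slide_lab_of_ne hbe]

theorem slide_slide_o_self (haf : a ≠ f ∧ a ≠ G.bar f) :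
    ((G.slide f b).slide e a).o e = (G.slide e a).o e := by
  rw [slide_o_self, slide_o_self, slide_t_of_ne haf.2]

theorem slide_slide_lab_self (hef : e ≠ f) (haf : a ≠ f ∧ a ≠ G.bar f) :
    ((G.slide f b).slide e a).lab e = (G.slide e a).lab e := by
  rw [slide_lab_self, slide_lab_self, slide_lab_of_ne hef, slide_lab_of_ne haf.1, slide_bar,
    slide_lab_bar_of_ne haf.2]

theorem slide_comm (hfe : f ≠ e) (haf : a ≠ f ∧ a ≠ G.bar f) (hbe : b ≠ e ∧ b ≠ G.bar e) :
    (G.slide e a).slide f b = (G.slide f b).slide e a := by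
  ext x
  · obtain rfl | hxe := eq_or_ne x e
    · rw [slide_o_of_ne hfe.symm, slide_slide_o_self haf]
    obtain rfl | hxf := eq_or_ne x f
    · rw [slide_slide_o_self hbe, slide_o_of_ne hxe]
    · simp only [slide_o_of_ne hxe, slide_o_of_ne hxf]
  · rfl
  · obtain rfl | hxe := eq_or_ne x e
    · rw [slide_lab_of_ne hfe.symm, slide_slide_lab_self hfe.symm haf]
    obtain rfl | hxf := eq_or_ne x f
    · rw [slide_slide_lab_self hfe hbe, slide_lab_of_ne hxe]
    · simp only [slide_lab_of_ne hxe, slide_lab_of_ne hxf]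

/-- If `e` and `f` have labels `λ(a) k` and `λ(ā) k j`, then crossing `ā` gives `f` the label
`λ(a) k j`. -/
theorem CanSlide.exists_slide_lab_eq_mul (hlab : ∀ x, G.lab x ≠ 0) (hea : G.CanSlide e a)
    (hfe : (G.slide e a).CanSlide f e) :
    ∃ j, (G.slide e a).lab f = (G.slide e a).lab e * j ∧
      (G.slide f (G.bar a)).lab f = G.lab e * j := by
  obtain ⟨k, hk⟩ := hea.2.2.2
  obtain ⟨j, hj⟩ := hfe.2.2.2
  have hf : G.lab f = G.lab (G.bar a) * (k * j) := by
    rw [← mul_assoc, ← slide_lab_self_of_eq_mul (hlab a) hk, ← hj, slide_lab_of_ne hfe.1.symm]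
  refine ⟨j, hj, ?_⟩
  rw [slide_lab_self_of_eq_mul (hlab _) hf, G.bar_bar, hk, mul_assoc]

theorem CanSlide.canSlide_bar (ha : G.lab a ≠ 0) (haf : a ≠ f ∧ a ≠ G.bar f)
    (hea : G.CanSlide e a) (hfe : (G.slide e a).CanSlide f e) : G.CanSlide f (G.bar a) := by
  obtain ⟨hef, -, ho, hdvd⟩ := hfe
  obtain ⟨k, hk⟩ := hea.2.2.2
  rw [slide_o_self, slide_o_of_ne hef.symm] at ho
  rw [slide_lab_self_of_eq_mul ha hk, slide_lab_of_ne hef.symm] at hdvd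
  exact ⟨bar_ne_of_ne_bar haf.2, G.bar_involutive.injective.ne haf.1, ho,
    dvd_of_mul_right_dvd hdvd⟩

theorem CanSlide.canSlide_slide_bar (hlab : ∀ x, G.lab x ≠ 0) (hea : G.CanSlide e a)
    (hfe : (G.slide e a).CanSlide f e) : (G.slide f (G.bar a)).CanSlide f e := by
  obtain ⟨j, -, hj⟩ := hea.exists_slide_lab_eq_mul hlab hfe
  obtain ⟨hef, hefbar, -, -⟩ := hfe
  refine ⟨hef, hefbar, ?_, ?_⟩
  · rw [slide_o_of_ne hef, slide_o_self, t_bar, hea.2.2.1]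
  · rw [slide_lab_of_ne hef, hj]
    exact dvd_mul_right _ _

theorem CanSlide.slide_slide_eq (hlab : ∀ x, G.lab x ≠ 0) (haf : a ≠ f ∧ a ≠ G.bar f)
    (hea : G.CanSlide e a) (hfe : (G.slide e a).CanSlide f e) :
    (G.slide e a).slide f e = ((G.slide f (G.bar a)).slide f e).slide e a := by
  obtain ⟨j, hj, hj'⟩ := hea.exists_slide_lab_eq_mul hlab hfe
  obtain ⟨hef, (hefbar : e ≠ G.bar f), -, -⟩ := hfe
  have hee : e ≠ G.bar e := (G.bar_ne e).symm
  ext x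
  · obtain rfl | hxe := eq_or_ne x e
    · rw [slide_o_of_ne hef, slide_slide_o_self (G := G.slide f (G.bar a)) haf,
        slide_slide_o_self haf]
    obtain rfl | hxf := eq_or_ne x f
    · rw [slide_o_of_ne hxe, slide_o_self, slide_o_self, slide_t_of_ne hee, slide_t_of_ne hefbar]
    · simp only [slide_o_of_ne hxe, slide_o_of_ne hxf]
  · rfl
  · obtain rfl | hxe := eq_or_ne x e
    · rw [slide_lab_of_ne hef, slide_slide_lab_self (G := G.slide f (G.bar a)) hef haf,
        slide_slide_lab_self hef haf]
    obtain rfl | hxf := eq_or_ne x f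
    · rw [← slide_lab_of_ne hef] at hj'
      rw [slide_lab_of_ne hxe, slide_lab_self_of_eq_mul (hea.slide_lab_ne_zero hlab e) hj,
        slide_lab_self_of_eq_mul ((slide_lab_of_ne hef).trans_ne (hlab e)) hj', slide_bar,
        slide_bar, slide_lab_bar_of_ne hee, slide_lab_bar_of_ne hefbar]
    · simp only [slide_lab_of_ne hxe, slide_lab_of_ne hxf]

end Slide

section SlidePath

theorem slidePath_bar (G : LGraph V E) (e : E) (A : List E) : (G.slidePath e A).bar = G.bar := by
  induction A generalizing G with
  | nil => rfl
  | cons _ _ ih => exact ih _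

theorem slidePath_append (G : LGraph V E) (e : E) (A B : List E) :
    G.slidePath e (A ++ B) = (G.slidePath e A).slidePath e B := by
  induction A generalizing G with
  | nil => rfl
  | cons _ _ ih => exact ih _

theorem canSlidePath_append :
    G.CanSlidePath e (A ++ B) ↔ G.CanSlidePath e A ∧ (G.slidePath e A).CanSlidePath e B := by
  induction A generalizing G with
  | nil => exact (iff_of_eq (true_and _)).symm
  | cons _ _ ih => exact (and_congr_right fun _ => ih).trans and_assoc.symm

theorem GoodSlidePath.canSlidePath (h : G.GoodSlidePath e A) : G.CanSlidePath e A := by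
  induction A generalizing G with
  | nil => trivial
  | cons _ _ ih => exact ⟨h.1, ih h.2.2⟩

theorem CanSlidePath.ne_and_ne_bar (h : G.CanSlidePath e A) :
    ∀ x ∈ A, x ≠ e ∧ x ≠ G.bar e := by
  induction A generalizing G with
  | nil => simp
  | cons a _ ih => exact List.forall_mem_cons.mpr ⟨⟨h.1.1, h.1.2.1⟩, ih (G := G.slide e a) h.2⟩

theorem CanSlidePath.slidePath_lab_ne_zero (h : G.CanSlidePath e A) (hlab : ∀ x, G.lab x ≠ 0) :
    ∀ x, (G.slidePath e A).lab x ≠ 0 := by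
  induction A generalizing G with
  | nil => exact hlab
  | cons _ _ ih => exact ih h.2 (h.1.slide_lab_ne_zero hlab)

theorem canSlide_slidePath_iff (hfe : f ≠ e) (hbe : b ≠ e) :
    (G.slidePath e A).CanSlide f b ↔ G.CanSlide f b := by
  induction A generalizing G with
  | nil => rfl
  | cons _ _ ih => exact ih.trans (canSlide_slide_iff hfe hbe)

theorem slidePath_slide_comm (hfe : f ≠ e) (haf : a ≠ f ∧ a ≠ G.bar f)
    (hB : ∀ b ∈ B, b ≠ e ∧ b ≠ G.bar e) :
    (G.slide e a).slidePath f B = (G.slidePath f B).slide e a := by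
  induction B generalizing G with
  | nil => rfl
  | cons b l ih =>
    obtain ⟨hb, hl⟩ := List.forall_mem_cons.mp hB
    rw [slidePath, slidePath, slide_comm hfe haf hb]
    exact ih haf hl

theorem canSlidePath_slide_iff (hfe : f ≠ e) (haf : a ≠ f ∧ a ≠ G.bar f)
    (hB : ∀ b ∈ B, b ≠ e ∧ b ≠ G.bar e) :
    (G.slide e a).CanSlidePath f B ↔ G.CanSlidePath f B := by
  induction B generalizing G with
  | nil => rfl
  | cons b l ih =>
    obtain ⟨hb, hl⟩ := List.forall_mem_cons.mp hB
    rw [CanSlidePath, CanSlidePath, canSlide_slide_iff hfe hb.1, slide_comm hfe haf hb]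
    exact and_congr_right fun _ => ih haf hl

theorem CanSlide.swap (hlab : ∀ x, G.lab x ≠ 0) (haf : a ≠ f ∧ a ≠ G.bar f)
    (hea : G.CanSlide e a) (hfe : (G.slide e a).CanSlide f e) :
    G.CanSlidePath f [G.bar a, e] ∧ (G.slidePath f [G.bar a, e]).CanSlide e a ∧
      (G.slide e a).slide f e = (G.slidePath f [G.bar a, e]).slide e a :=
  ⟨⟨hea.canSlide_bar (hlab a) haf hfe, hea.canSlide_slide_bar hlab hfe, trivial⟩,
    (canSlide_slidePath_iff hfe.1 haf.1).mpr hea, hea.slide_slide_eq hlab haf hfe⟩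

end SlidePath

end LGraph

theorem stmt15_general {V E : Type} (G : LGraph V E) (hlab : ∀ x, G.lab x ≠ 0) (e f : E)
    (A : List E) (hA : ∀ x ∈ A, x ≠ f ∧ x ≠ G.bar f) (heA : G.CanSlidePath e A)
    (hfe : (G.slidePath e A).CanSlide f e) :
    G.CanSlidePath f (A.reverse.map G.bar ++ [e]) ∧
      (G.slidePath f (A.reverse.map G.bar ++ [e])).CanSlidePath e A ∧
      (G.slidePath e A).slide f e
        = (G.slidePath f (A.reverse.map G.bar ++ [e])).slidePath e A := by
  induction A generalizing G with
  | nil => exact ⟨⟨hfe, trivial⟩, trivial, rfl⟩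
  | cons a l ih =>
    obtain ⟨hea, hel⟩ := heA
    obtain ⟨haf, hlf⟩ := List.forall_mem_cons.mp hA
    have hef : e ≠ f := hfe.1
    set B := l.reverse.map G.bar with hB_def
    have hB : ∀ x ∈ B, x ≠ e ∧ x ≠ G.bar e :=
      LGraph.ne_and_ne_bar_of_mem_reverse_map_bar hel.ne_and_ne_bar
    set H := G.slidePath f B
    have hHbar : H.bar = G.bar := G.slidePath_bar f B
    have hcomm : (G.slide e a).slidePath f B = H.slide e a :=
      LGraph.slidePath_slide_comm hef.symm haf hB
    have hIH := ih (G.slide e a) (hea.slide_lab_ne_zero hlab) hlf hel hfe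
    rw [LGraph.slide_bar, ← hB_def, LGraph.slidePath_append, LGraph.canSlidePath_append,
      LGraph.canSlidePath_slide_iff hef.symm haf hB, hcomm] at hIH
    obtain ⟨⟨hfB, hfeH, -⟩, hel', heq⟩ := hIH
    have heaH : H.CanSlide e a := (LGraph.canSlide_slidePath_iff hef haf.1).mpr hea
    have hswap := heaH.swap (hfB.slidePath_lab_ne_zero hlab) (hHbar.symm ▸ haf) hfeH
    rw [hHbar] at hswap
    obtain ⟨hfae, hea', hswap_eq⟩ := hswap
    have hpath : (a :: l).reverse.map G.bar ++ [e] = B ++ [G.bar a, e] := by simp [hB_def]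
    rw [hpath, LGraph.slidePath_append, LGraph.canSlidePath_append]
    refine ⟨⟨hfB, hfae⟩, ⟨hea', ?_⟩, ?_⟩
    · exact hswap_eq ▸ hel'
    · exact heq.trans (congrArg (LGraph.slidePath · e l) hswap_eq)

/-- (Lemma 4.3(d)) In a reduced non-ascending positively-labeled graph,
for mobile edges `e, f` with `f ∉ {e, ē}` and a path `A` avoiding `{e, ē, f, f̄}`:
if `e` can slide over `A` and afterwards `f` over `e` (all slides valid, all intermediate
graphs reduced), then `f` can slide over `Ā·e` and afterwards `e` over `A`, with the
same resulting labeled graph. -/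
theorem stmt15 {V E : Type} [Finite V] [Finite E] (G : LGraph V E)
    (hpos : G.Positive) (hred : G.Reduced) (hna : G.NonAscending)
    (e f : E) (hme : G.Mobile e) (hmf : G.Mobile f)
    (hfe : f ≠ e) (hfebar : f ≠ G.bar e)
    (A : List E)
    (hA : ∀ x ∈ A, x ≠ e ∧ x ≠ G.bar e ∧ x ≠ f ∧ x ≠ G.bar f)
    (h1 : G.GoodSlidePath e A)
    (h2 : (G.slidePath e A).CanSlide f e)
    (hred2 : ((G.slidePath e A).slide f e).Reduced) :
    G.CanSlidePath f (A.reverse.map G.bar ++ [e]) ∧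
      (G.slidePath f (A.reverse.map G.bar ++ [e])).CanSlidePath e A ∧
      (G.slidePath e A).slide f e
        = (G.slidePath f (A.reverse.map G.bar ++ [e])).slidePath e A :=
  stmt15_general G (fun x => (hpos x).ne') e f A (fun x hx => (hA x hx).2.2) h1.canSlidePath h2
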